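/- Let Ω ⊂ ℝ² be open and bounded, a, m > 0, and define Σ = sup_{K ⊂ Ω^c compact} inf { (1/m)‖(∇ - iF)φ‖²_{L²} + a : φ ∈ C₀^∞(Ω^c \ K), ‖φ‖_{L²} = 1 }, where F(x₁,x₂) = (−x₂/2, x₁/2). Then Σ ≥ 1/m + a. Consequently, the bottom of the essential spectrum of the interface operator P (associated with the quadratic form Q(φ) = ∫_Ω(|∇_F φ|² − |φ|²) + ∫_{Ω^c}((1/m)|∇_F φ|² + a|φ|²)) is at least 1/m + a. -/

import Mathlib

open MeasureTheory Set Filter Topology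

noncomputable section

/-- First component of the magnetic gradient `(∇ - iA)φ` on `ℝ²`. -/
def mg1 (A : ℝ × ℝ → ℝ × ℝ) (φ : ℝ × ℝ → ℂ) (x : ℝ × ℝ) : ℂ :=
  fderiv ℝ φ x (1, 0) - ((A x).1 : ℂ) * Complex.I * φ x

/-- Second component of the magnetic gradient `(∇ - iA)φ` on `ℝ²`. -/
def mg2 (A : ℝ × ℝ → ℝ × ℝ) (φ : ℝ × ℝ → ℂ) (x : ℝ × ℝ) : ℂ :=
  fderiv ℝ φ x (0, 1) - ((A x).2 : ℂ) * Complex.I * φ x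

/-- Pointwise squared norm of the magnetic gradient. -/
def mnorm2 (A : ℝ × ℝ → ℝ × ℝ) (φ : ℝ × ℝ → ℂ) (x : ℝ × ℝ) : ℝ :=
  ‖mg1 A φ x‖^2 + ‖mg2 A φ x‖^2

/-- The canonical magnetic potential `F(x₁,x₂) = (-x₂/2, x₁/2)` with `curl F = 1`. -/
def Fpot : ℝ × ℝ → ℝ × ℝ := fun x => (-x.2 / 2, x.1 / 2)

/-- Persson's quantity `Σ` for the interface operator: the sup over compact
`K ⊆ Ωᶜ` of the infimum of `(1/m)‖(∇-iF)φ‖² + a` over normalized test functions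
`φ ∈ C₀^∞(Ωᶜ \ K)`. -/
def SigmaP (Ω : Set (ℝ × ℝ)) (a m : ℝ) : ℝ :=
  sSup {s : ℝ | ∃ K : Set (ℝ × ℝ), IsCompact K ∧ K ⊆ Ωᶜ ∧
    s = sInf {r : ℝ | ∃ φ : ℝ × ℝ → ℂ, ContDiff ℝ (⊤ : ℕ∞) φ ∧ HasCompactSupport φ ∧
      tsupport φ ⊆ Ωᶜ \ K ∧ (∫ x : ℝ × ℝ, ‖φ x‖^2) = 1 ∧
      r = (1/m) * (∫ x : ℝ × ℝ, mnorm2 Fpot φ x) + a}}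

lemma integral_fderiv_zero (G : ℝ × ℝ → ℝ) (hG : ContDiff ℝ 1 G) (hs : HasCompactSupport G)
    (v : ℝ × ℝ) : Integrable (fun x => fderiv ℝ G x v) ∧ ∫ x, fderiv ℝ G x v = 0 := by
  have hc : Continuous (fun x => fderiv ℝ G x v) :=
    (hG.continuous_fderiv (by norm_num)).clm_apply continuous_const
  have hs' : HasCompactSupport (fun x => fderiv ℝ G x v) := hs.fderiv_apply ℝ v
  have hi : Integrable (fun x => fderiv ℝ G x v) := hc.integrable_of_hasCompactSupport hs'
  refine ⟨hi, ?_⟩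
  have h := integral_mul_fderiv_eq_neg_fderiv_mul_of_integrable (μ := (volume : Measure (ℝ × ℝ)))
    (f := fun _ : ℝ × ℝ => (1 : ℝ)) (g := G) (v := v)
    (by simp) (by simpa using hi)
    (by simpa using hG.continuous.integrable_of_hasCompactSupport hs)
    (fun x _ => by fun_prop) (fun x _ => (hG.differentiable (by norm_num)) x)
  simpa using h

/-- Pointwise identity data for the real and imaginary parts. -/
lemma fderiv_G (p q F : ℝ × ℝ → ℝ) (hp : ContDiff ℝ 2 p) (hq : ContDiff ℝ 2 q)
    (hF : Differentiable ℝ F) (v w x : ℝ × ℝ) :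
    fderiv ℝ (fun y => fderiv ℝ q y v * p y - fderiv ℝ p y v * q y
        - F y * (p y ^ 2 + q y ^ 2)) x w
      = fderiv ℝ (fderiv ℝ q) x w v * p x + fderiv ℝ q x v * fderiv ℝ p x w
        - fderiv ℝ (fderiv ℝ p) x w v * q x - fderiv ℝ p x v * fderiv ℝ q x w
        - fderiv ℝ F x w * (p x ^ 2 + q x ^ 2)
        - F x * (2 * p x * fderiv ℝ p x w + 2 * q x * fderiv ℝ q x w) := by
  have h1 : ∀ f : ℝ × ℝ → ℝ, ContDiff ℝ 2 f → HasFDerivAt f (fderiv ℝ f x) x :=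
    fun f hf => (hf.differentiable (by norm_num) x).hasFDerivAt
  have h2 : ∀ f : ℝ × ℝ → ℝ, ContDiff ℝ 2 f →
      HasFDerivAt (fun y => fderiv ℝ f y v) ((fderiv ℝ (fderiv ℝ f) x).flip v) x := by
    intro f hf
    have : Differentiable ℝ (fderiv ℝ f) :=
      (hf.fderiv_right (m := 1) (by norm_num)).differentiable (by norm_num)
    have h := (this x).hasFDerivAt.clm_apply (hasFDerivAt_const v x)
    simpa using h
  have h := (((h2 q hq).mul (h1 p hp)).sub ((h2 p hp).mul (h1 q hq))).sub
    ((hF x).hasFDerivAt.mul (((h1 p hp).pow 2).add ((h1 q hq).pow 2)))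
  have h' : fderiv ℝ (fun y => fderiv ℝ q y v * p y - fderiv ℝ p y v * q y
        - F y * (p y ^ 2 + q y ^ 2)) x = _ := h.fderiv
  rw [h']
  simp
  ring

lemma magnetic_bound (φ : ℝ × ℝ → ℂ) (hφ : ContDiff ℝ (⊤ : ℕ∞) φ) (hs : HasCompactSupport φ) :
    ∫ x : ℝ × ℝ, ‖φ x‖^2 ≤ ∫ x : ℝ × ℝ, mnorm2 Fpot φ x := by
  have hφ2 : ContDiff ℝ 2 φ := hφ.of_le (WithTop.coe_le_coe.2 (le_top : (2 : ℕ∞) ≤ ⊤))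
  set p : ℝ × ℝ → ℝ := fun x => (φ x).re with hpdef
  set q : ℝ × ℝ → ℝ := fun x => (φ x).im with hqdef
  have hp : ContDiff ℝ 2 p := Complex.reCLM.contDiff.comp hφ2
  have hq : ContDiff ℝ 2 q := Complex.imCLM.contDiff.comp hφ2
  have hps : HasCompactSupport p := hs.comp_left (g := Complex.re) rfl
  have hqs : HasCompactSupport q := hs.comp_left (g := Complex.im) rfl
  have hφd : ∀ x, HasFDerivAt φ (fderiv ℝ φ x) x := fun x =>
    (hφ2.differentiable (by norm_num) x).hasFDerivAt
  have hpd : ∀ x v, fderiv ℝ p x v = (fderiv ℝ φ x v).re := by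
    intro x v
    have : HasFDerivAt p (Complex.reCLM.comp (fderiv ℝ φ x)) x :=
      Complex.reCLM.hasFDerivAt.comp x (hφd x)
    rw [this.fderiv]; rfl
  have hqd : ∀ x v, fderiv ℝ q x v = (fderiv ℝ φ x v).im := by
    intro x v
    have : HasFDerivAt q (Complex.imCLM.comp (fderiv ℝ φ x)) x :=
      Complex.imCLM.hasFDerivAt.comp x (hφd x)
    rw [this.fderiv]; rfl
  let F1 : ℝ × ℝ → ℝ := fun x => -x.2 / 2
  let F2 : ℝ × ℝ → ℝ := fun x => x.1 / 2
  have hF1 : ContDiff ℝ 2 F1 := by fun_prop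
  have hF2 : ContDiff ℝ 2 F2 := by fun_prop
  have hF1d : ∀ x, fderiv ℝ F1 x (0, 1) = -1/2 := by
    intro x
    have : F1 = fun y => ((-1/2 : ℝ) • ContinuousLinearMap.snd ℝ ℝ ℝ) y := by
      ext y; simp [F1]; ring
    rw [this, ContinuousLinearMap.fderiv]; simp
  have hF2d : ∀ x, fderiv ℝ F2 x (1, 0) = 1/2 := by
    intro x
    have : F2 = fun y => ((1/2 : ℝ) • ContinuousLinearMap.fst ℝ ℝ ℝ) y := by
      ext y; simp [F2]; ring
    rw [this, ContinuousLinearMap.fderiv]; simp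
  let G : (ℝ × ℝ → ℝ) → (ℝ × ℝ) → ℝ × ℝ → ℝ := fun F v y =>
    fderiv ℝ q y v * p y - fderiv ℝ p y v * q y - F y * (p y ^ 2 + q y ^ 2)
  have hGc : ∀ F v, ContDiff ℝ 2 F → ContDiff ℝ 1 (G F v) := by
    intro F v hF
    have a1 : ContDiff ℝ 1 (fun y => fderiv ℝ q y v) :=
      (hq.fderiv_right (m := 1) (by norm_num)).clm_apply contDiff_const
    have a2 : ContDiff ℝ 1 (fun y => fderiv ℝ p y v) :=
      (hp.fderiv_right (m := 1) (by norm_num)).clm_apply contDiff_const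
    have a3 : ContDiff ℝ 1 p := hp.of_le (by norm_num)
    have a4 : ContDiff ℝ 1 q := hq.of_le (by norm_num)
    have a5 : ContDiff ℝ 1 F := hF.of_le (by norm_num)
    exact ((a1.mul a3).sub (a2.mul a4)).sub (a5.mul ((a3.pow 2).add (a4.pow 2)))
  have hzero : ∀ x, x ∉ tsupport φ → p x = 0 ∧ q x = 0 := by
    intro x hx
    have := image_eq_zero_of_notMem_tsupport hx
    simp [p, q, this]
  have hGs : ∀ F v, HasCompactSupport (G F v) := by
    intro F v
    refine HasCompactSupport.intro hs (fun x hx => ?_)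
    obtain ⟨h1, h2⟩ := hzero x hx
    simp [G, h1, h2]
  obtain ⟨i1, e1⟩ := integral_fderiv_zero (G F1 (1, 0)) (hGc _ _ hF1) (hGs _ _) (0, 1)
  obtain ⟨i2, e2⟩ := integral_fderiv_zero (G F2 (0, 1)) (hGc _ _ hF2) (hGs _ _) (1, 0)
  have hcφ := hφ.continuous
  have hcd : ∀ v, Continuous (fun x => fderiv ℝ φ x v) := fun v =>
    (hφ2.continuous_fderiv (by norm_num)).clm_apply continuous_const
  have iN : Integrable (fun x => ‖φ x‖^2) := by
    refine Continuous.integrable_of_hasCompactSupport (by fun_prop) ?_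
    refine HasCompactSupport.intro hs (fun x hx => ?_)
    simp [image_eq_zero_of_notMem_tsupport hx]
  have iM : Integrable (fun x => mnorm2 Fpot φ x) := by
    refine Continuous.integrable_of_hasCompactSupport ?_ ?_
    · have := hcd (1, 0)
      have := hcd (0, 1)
      unfold mnorm2 mg1 mg2 Fpot
      fun_prop
    · refine HasCompactSupport.intro hs (fun x hx => ?_)
      have h0 := image_eq_zero_of_notMem_tsupport hx
      have h1 : fderiv ℝ φ x = 0 := by
        apply image_eq_zero_of_notMem_tsupport
        exact fun h => hx (tsupport_fderiv_subset ℝ h)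
      simp [mnorm2, mg1, mg2, h0, h1]
  have key : ∀ x, 0 ≤ mnorm2 Fpot φ x - ‖φ x‖^2
      + (fderiv ℝ (G F1 (1, 0)) x (0, 1) - fderiv ℝ (G F2 (0, 1)) x (1, 0)) := by
    intro x
    have g1 := fderiv_G p q F1 hp hq (hF1.differentiable (by norm_num)) (1, 0) (0, 1) x
    have g2 := fderiv_G p q F2 hp hq (hF2.differentiable (by norm_num)) (0, 1) (1, 0) x
    have sp : fderiv ℝ (fderiv ℝ p) x (0, 1) (1, 0) = fderiv ℝ (fderiv ℝ p) x (1, 0) (0, 1) :=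
      (hp.contDiffAt.isSymmSndFDerivAt (by simp)) _ _
    have sq : fderiv ℝ (fderiv ℝ q) x (0, 1) (1, 0) = fderiv ℝ (fderiv ℝ q) x (1, 0) (0, 1) :=
      (hq.contDiffAt.isSymmSndFDerivAt (by simp)) _ _
    change 0 ≤ mnorm2 Fpot φ x - ‖φ x‖^2 +
      (fderiv ℝ (fun y => fderiv ℝ q y (1, 0) * p y - fderiv ℝ p y (1, 0) * q y
        - F1 y * (p y ^ 2 + q y ^ 2)) x (0, 1) -
       fderiv ℝ (fun y => fderiv ℝ q y (0, 1) * p y - fderiv ℝ p y (0, 1) * q y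
        - F2 y * (p y ^ 2 + q y ^ 2)) x (1, 0))
    rw [g1, g2, sp, sq, hF1d, hF2d]
    simp only [hpd, hqd]
    have hn : ∀ z : ℂ, ‖z‖^2 = z.re^2 + z.im^2 := by
      intro z; rw [Complex.sq_norm, Complex.normSq_apply]; ring
    simp only [mnorm2, mg1, mg2, hn, Fpot, p, q, F1, F2]
    generalize fderiv ℝ φ x (1, 0) = A
    generalize fderiv ℝ φ x (0, 1) = B
    generalize φ x = u
    simp only [Complex.sub_re, Complex.sub_im, Complex.mul_re, Complex.mul_im, Complex.I_re,
      Complex.I_im, Complex.ofReal_re, Complex.ofReal_im]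
    have h1 := sq_nonneg ((A.re + -x.2 / 2 * u.im) - (B.im - x.1 / 2 * u.re))
    have h2 := sq_nonneg ((A.im - -x.2 / 2 * u.re) + (B.re + x.1 / 2 * u.im))
    refine (add_nonneg h1 h2).trans (le_of_eq ?_)
    ring
  have hint : 0 ≤ ∫ x, (mnorm2 Fpot φ x - ‖φ x‖^2
      + (fderiv ℝ (G F1 (1, 0)) x (0, 1) - fderiv ℝ (G F2 (0, 1)) x (1, 0))) :=
    integral_nonneg key
  have e3 := integral_add (iM.sub iN) (i1.sub i2)
  have e4 := integral_sub iM iN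
  have e5 := integral_sub i1 i2
  simp only [Pi.sub_apply] at e3
  rw [e3, e4, e5, e1, e2] at hint
  linarith

/-- A normalized smooth bump function supported in the closed unit ball. -/
lemma exists_bump : ∃ f : ℝ × ℝ → ℂ, ContDiff ℝ (⊤ : ℕ∞) f ∧
    tsupport f ⊆ Metric.closedBall 0 1 ∧ (∫ x : ℝ × ℝ, ‖f x‖^2) = 1 := by
  let b : ContDiffBump (0 : ℝ × ℝ) := ⟨1/2, 1, by norm_num, by norm_num⟩
  have hbt : tsupport b = Metric.closedBall 0 1 := b.tsupport_eq
  have hpos : 0 < ∫ x : ℝ × ℝ, (b x)^2 := by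
    refine Continuous.integral_pos_of_hasCompactSupport_nonneg_nonzero (x := 0)
      (b.continuous.pow 2) ?_ (fun x => sq_nonneg _) ?_
    · refine HasCompactSupport.intro b.hasCompactSupport (fun x hx => ?_)
      simp [image_eq_zero_of_notMem_tsupport hx]
    · have : b 0 = 1 := b.one_of_mem_closedBall (by simp [b])
      simp [this]
  set c := ∫ x : ℝ × ℝ, (b x)^2 with hc
  refine ⟨fun x => (((Real.sqrt c)⁻¹ * b x : ℝ) : ℂ), ?_, ?_, ?_⟩
  · exact Complex.ofRealCLM.contDiff.comp (contDiff_const.mul b.contDiff)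
  · rw [← hbt]
    apply closure_mono
    intro x hx
    simp only [Function.mem_support] at hx ⊢
    intro h
    simp [h] at hx
  · have : ∀ x, ‖(((Real.sqrt c)⁻¹ * b x : ℝ) : ℂ)‖^2 = c⁻¹ * (b x)^2 := by
      intro x
      rw [Complex.norm_real, Real.norm_eq_abs, sq_abs, mul_pow, inv_pow, Real.sq_sqrt hpos.le]
    simp only [this]
    rw [integral_const_mul, ← hc]
    exact inv_mul_cancel₀ hpos.ne.symm

/-- Magnetic translation. -/
def mtrans (t : ℝ) (f : ℝ × ℝ → ℂ) (x : ℝ × ℝ) : ℂ :=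
  Complex.exp (((t * x.2 / 2 : ℝ) : ℂ) * Complex.I) * f (x - (t, 0))

lemma mtrans_norm (t : ℝ) (f : ℝ × ℝ → ℂ) (x : ℝ × ℝ) : ‖mtrans t f x‖ = ‖f (x - (t, 0))‖ := by
  rw [mtrans, norm_mul, Complex.norm_exp_ofReal_mul_I, one_mul]

lemma mtrans_contDiff (t : ℝ) (f : ℝ × ℝ → ℂ) (hf : ContDiff ℝ (⊤ : ℕ∞) f) :
    ContDiff ℝ (⊤ : ℕ∞) (mtrans t f) := by
  have h1 : ContDiff ℝ (⊤ : ℕ∞) (fun x : ℝ × ℝ => ((t * x.2 / 2 : ℝ) : ℂ)) :=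
    
    Complex.ofRealCLM.contDiff.comp ((contDiff_const.mul contDiff_snd).div_const 2)
  have h2 : ContDiff ℝ (⊤ : ℕ∞) (fun x : ℝ × ℝ => f (x - (t, 0))) :=
    hf.comp (contDiff_id.sub contDiff_const)
  exact ((h1.mul contDiff_const).cexp).mul h2

lemma mtrans_mnorm2 (t : ℝ) (f : ℝ × ℝ → ℂ) (hf : ContDiff ℝ (⊤ : ℕ∞) f) (x : ℝ × ℝ) :
    mnorm2 Fpot (mtrans t f) x = mnorm2 Fpot f (x - (t, 0)) := by
  have hd : ∀ v : ℝ × ℝ, fderiv ℝ (mtrans t f) x v =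
      Complex.exp (((t * x.2 / 2 : ℝ) : ℂ) * Complex.I) *
        (fderiv ℝ f (x - (t, 0)) v + ((t * v.2 / 2 : ℝ) : ℂ) * Complex.I * f (x - (t, 0))) := by
    intro v
    let L : ℝ × ℝ →L[ℝ] ℂ :=
      Complex.ofRealCLM.comp ((t / 2 : ℝ) • ContinuousLinearMap.snd ℝ ℝ ℝ)
    have hL : (fun x : ℝ × ℝ => ((t * x.2 / 2 : ℝ) : ℂ)) = L := by
      ext y; simp [L]; ring
    have h1 : HasFDerivAt (fun x : ℝ × ℝ => ((t * x.2 / 2 : ℝ) : ℂ)) L x := by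
      rw [hL]; exact L.hasFDerivAt
    have h2 : HasFDerivAt (fun x : ℝ × ℝ => f (x - (t, 0))) (fderiv ℝ f (x - (t, 0))) x := by
      have := (hf.differentiable (by simp) (x - (t, 0))).hasFDerivAt
      exact by
        have h3 := this.comp x ((hasFDerivAt_id x).sub_const ((t, 0) : ℝ × ℝ))
        rw [ContinuousLinearMap.comp_id] at h3
        exact h3
    have h : HasFDerivAt (mtrans t f) _ x := ((h1.mul_const Complex.I).cexp).mul h2
    rw [h.fderiv]
    have hLv : L v = ((t * v.2 / 2 : ℝ) : ℂ) := (congrFun hL v).symm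
    simp only [add_apply, smul_apply, smul_eq_mul, hLv]
    ring
  have m1 : mg1 Fpot (mtrans t f) x =
      Complex.exp (((t * x.2 / 2 : ℝ) : ℂ) * Complex.I) * mg1 Fpot f (x - (t, 0)) := by
    rw [mg1, mg1, hd]
    simp only [mtrans, Fpot, Prod.snd_sub, Prod.fst_sub]
    push_cast
    ring
  have m2 : mg2 Fpot (mtrans t f) x =
      Complex.exp (((t * x.2 / 2 : ℝ) : ℂ) * Complex.I) * mg2 Fpot f (x - (t, 0)) := by
    rw [mg2, mg2, hd]
    simp only [mtrans, Fpot, Prod.snd_sub, Prod.fst_sub]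
    push_cast
    ring
  rw [mnorm2, mnorm2, m1, m2, norm_mul, norm_mul, Complex.norm_exp_ofReal_mul_I, one_mul, one_mul]

lemma exists_test : ∃ E : ℝ, ∀ B : Set (ℝ × ℝ), Bornology.IsBounded B →
    ∃ φ : ℝ × ℝ → ℂ, ContDiff ℝ (⊤ : ℕ∞) φ ∧ HasCompactSupport φ ∧
      tsupport φ ⊆ Bᶜ ∧ (∫ x : ℝ × ℝ, ‖φ x‖^2) = 1 ∧ (∫ x : ℝ × ℝ, mnorm2 Fpot φ x) = E := by
  obtain ⟨f, hf, hfs, hf1⟩ := exists_bump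
  refine ⟨∫ x, mnorm2 Fpot f x, fun B hB => ?_⟩
  obtain ⟨R, hR⟩ := hB.subset_closedBall 0
  let t := |R| + 2
  have hsub : tsupport (mtrans t f) ⊆ Metric.closedBall (t, 0) 1 := by
    apply closure_minimal _ Metric.isClosed_closedBall
    intro x hx
    have : f (x - (t, 0)) ≠ 0 := by
      intro h
      apply hx
      simp [mtrans, h]
    have h := hfs (subset_tsupport f this)
    simpa [dist_eq_norm] using h
  refine ⟨mtrans t f, mtrans_contDiff t f hf, ?_, ?_, ?_, ?_⟩
  · exact HasCompactSupport.of_support_subset_isCompact (isCompact_closedBall _ 1)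
      ((subset_tsupport _).trans hsub)
  · intro x hx hxB
    have h1 := hsub hx
    have h2 := hR hxB
    simp only [Metric.mem_closedBall, Prod.dist_eq, Real.dist_eq, max_le_iff, Prod.fst_zero] at h1 h2
    have h3 := abs_le.1 h1.1
    have h4 := abs_le.1 h2.1
    have := le_abs_self R
    simp only [t] at h3
    linarith [h3.1, h4.2]
  · simp only [mtrans_norm]
    rw [integral_sub_right_eq_self (fun x => ‖f x‖^2) ((t, 0) : ℝ × ℝ)]
    exact hf1
  · simp only [mtrans_mnorm2 t f hf]
    exact integral_sub_right_eq_self (fun x => mnorm2 Fpot f x) ((t, 0) : ℝ × ℝ)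

/-- for `Ω` open and bounded, `Σ ≥ 1/m + a`; by Persson's lemma the
bottom of the essential spectrum of the interface operator is at least `1/m + a`. -/
theorem persson_lower_bound (Ω : Set (ℝ × ℝ)) (hΩ : IsOpen Ω)
    (hb : Bornology.IsBounded Ω) (a m : ℝ) (ha : 0 < a) (hm : 0 < m) :
    1/m + a ≤ SigmaP Ω a m := by
  obtain ⟨E, hE⟩ := exists_test
  have hm' : 0 < 1 / m := by positivity
  have hlow : ∀ K : Set (ℝ × ℝ), ∀ r ∈ {r : ℝ | ∃ φ : ℝ × ℝ → ℂ, ContDiff ℝ (⊤ : ℕ∞) φ ∧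
      HasCompactSupport φ ∧ tsupport φ ⊆ Ωᶜ \ K ∧ (∫ x : ℝ × ℝ, ‖φ x‖^2) = 1 ∧
      r = (1/m) * (∫ x : ℝ × ℝ, mnorm2 Fpot φ x) + a}, 1/m + a ≤ r := by
    rintro K r ⟨φ, h1, h2, -, h4, rfl⟩
    have := magnetic_bound φ h1 h2
    rw [h4] at this
    nlinarith
  have hmem : ∀ K : Set (ℝ × ℝ), IsCompact K → (1/m) * E + a ∈ {r : ℝ | ∃ φ : ℝ × ℝ → ℂ,
      ContDiff ℝ (⊤ : ℕ∞) φ ∧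
      HasCompactSupport φ ∧ tsupport φ ⊆ Ωᶜ \ K ∧ (∫ x : ℝ × ℝ, ‖φ x‖^2) = 1 ∧
      r = (1/m) * (∫ x : ℝ × ℝ, mnorm2 Fpot φ x) + a} := by
    intro K hK
    obtain ⟨φ, h1, h2, h3, h4, h5⟩ := hE (Ω ∪ K) (hb.union hK.isBounded)
    refine ⟨φ, h1, h2, fun x hx => ?_, h4, by rw [h5]⟩
    exact ⟨fun h => h3 hx (Or.inl h), fun h => h3 hx (Or.inr h)⟩
  have hbdd : BddAbove {s : ℝ | ∃ K : Set (ℝ × ℝ), IsCompact K ∧ K ⊆ Ωᶜ ∧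
    s = sInf {r : ℝ | ∃ φ : ℝ × ℝ → ℂ, ContDiff ℝ (⊤ : ℕ∞) φ ∧ HasCompactSupport φ ∧
      tsupport φ ⊆ Ωᶜ \ K ∧ (∫ x : ℝ × ℝ, ‖φ x‖^2) = 1 ∧
      r = (1/m) * (∫ x : ℝ × ℝ, mnorm2 Fpot φ x) + a}} := by
    refine ⟨(1/m) * E + a, ?_⟩
    rintro s ⟨K, hK, -, rfl⟩
    exact csInf_le ⟨1/m + a, hlow K⟩ (hmem K hK)
  exact (le_csInf ⟨_, hmem ∅ isCompact_empty⟩ (hlow ∅)).trans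
    (le_csSup hbdd ⟨∅, isCompact_empty, empty_subset _, rfl⟩)
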